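/- Let φ: ℝ → ℝ be bounded and measurable, let t > 0, and let X be a Gaussian random variable with mean 0 and variance t. Then E[φ(X)²] = ∑_{n≥0} (tⁿ/n!) ((P_t φ)^{(n)}(0))², where (P_t φ)^{(n)} denotes the n-th derivative of the heat evolution P_t φ. -/

import Mathlib

open MeasureTheory ProbabilityTheory Real

/-- The one-dimensional heat semigroup applied to a function `φ`. -/
noncomputable def heatP (t : ℝ) (φ : ℝ → ℝ) (x : ℝ) : ℝ :=
  ∫ y : ℝ, φ y * ((2 * Real.pi * t) ^ (-(1/2 : ℝ)) * Real.exp (-(x - y) ^ 2 / (2 * t)))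

theorem measure_ext_of_mgf_id_eq {μ ν : Measure ℝ} [IsFiniteMeasure μ] [IsFiniteMeasure ν]
    (hμ : integrableExpSet id μ = Set.univ) (h : mgf id μ = mgf id ν) : μ = ν := by
  have h0 : μ.real Set.univ = ν.real Set.univ := by simpa [mgf_zero'] using congrFun h 0
  have hzero : μ = 0 ↔ ν = 0 := by
    rw [← Measure.measure_univ_eq_zero, ← Measure.measure_univ_eq_zero (μ := ν),
      ← measureReal_eq_zero_iff, h0, measureReal_eq_zero_iff]
  refine Measure.ext_of_complexMGF_id_eq (funext fun z => ?_)
  exact eqOn_complexMGF_of_mgf' h hzero (by simp [hμ])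

theorem ae_eq_zero_of_integral_mul_exp_eq_zero {μ : Measure ℝ} {f : ℝ → ℝ}
    (hint : ∀ x, Integrable (fun y => f y * exp (x * y)) μ)
    (h : ∀ x, ∫ y, f y * exp (x * y) ∂μ = 0) : f =ᵐ[μ] 0 := by
  have hf : Integrable f μ := by simpa using hint 0
  have hp {g : ℝ → ℝ} (hg : ∀ x, Integrable (fun y => g y * exp (x * y)) μ) (x : ℝ) :
      Integrable (fun y => (ENNReal.ofReal (g y)).toReal • exp (x * y)) μ := by
    refine (hg x).pos_part.congr (.of_forall fun y => ?_)
    simp only [ENNReal.toReal_ofReal', smul_eq_mul]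
    rw [max_mul_of_nonneg _ _ (exp_pos _).le, zero_mul]
  have hneg (x : ℝ) : Integrable (fun y => (-f) y * exp (x * y)) μ := by simpa using (hint x).neg
  have hm : AEMeasurable (fun y => ENNReal.ofReal (f y)) μ := hf.aemeasurable.ennreal_ofReal
  have hm' : AEMeasurable (fun y => ENNReal.ofReal ((-f) y)) μ :=
    hf.neg.aemeasurable.ennreal_ofReal
  have hlt (g : ℝ → ℝ) : ∀ᵐ y ∂μ, ENNReal.ofReal (g y) < ⊤ := .of_forall fun y => by simp
  have : IsFiniteMeasure (μ.withDensity fun y => ENNReal.ofReal (f y)) :=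
    isFiniteMeasure_withDensity_ofReal hf.2
  have : IsFiniteMeasure (μ.withDensity fun y => ENNReal.ofReal ((-f) y)) :=
    isFiniteMeasure_withDensity_ofReal hf.neg.2
  have key : (μ.withDensity fun y => ENNReal.ofReal (f y))
      = μ.withDensity fun y => ENNReal.ofReal ((-f) y) := by
    refine measure_ext_of_mgf_id_eq (Set.eq_univ_of_forall fun x => ?_) (funext fun x => ?_)
    · exact (integrable_withDensity_iff_integrable_smul₀' hm (hlt f)).2 (hp hint x)
    · simp only [mgf, id]
      rw [integral_withDensity_eq_integral_toReal_smul₀ hm (hlt f),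
        integral_withDensity_eq_integral_toReal_smul₀ hm' (hlt (-f)), ← sub_eq_zero,
        ← integral_sub (hp hint x) (hp hneg x), ← h x]
      refine integral_congr_ae (.of_forall fun y => ?_)
      simp only [ENNReal.toReal_ofReal', smul_eq_mul, ← sub_mul, Pi.neg_apply]
      rw [max_zero_sub_max_neg_zero_eq_self]
  rw [withDensity_eq_iff hm hm' hf.lintegral_lt_top.ne] at key
  filter_upwards [key] with y hy
  rcases le_total (f y) 0 with h0 | h0
  · rw [ENNReal.ofReal_of_nonpos h0, eq_comm, ENNReal.ofReal_eq_zero] at hy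
    exact le_antisymm h0 (by simpa using hy)
  · rw [ENNReal.ofReal_of_nonpos (p := (-f) y) (by simpa using h0), ENNReal.ofReal_eq_zero] at hy
    exact le_antisymm hy h0

/-- A family with dense span can be mapped isometrically onto any other family with the same Gram
matrix. -/
theorem exists_isometry_of_inner_eq {ι H K : Type*} [NormedAddCommGroup H] [InnerProductSpace ℝ H]
    [NormedAddCommGroup K] [InnerProductSpace ℝ K] [CompleteSpace K] {u : ι → H} {v : ι → K}
    (hu : Dense (Submodule.span ℝ (Set.range u) : Set H))
    (h : ∀ i j, inner ℝ (u i) (u j) = inner ℝ (v i) (v j)) :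
    ∃ T : H →ₗᵢ[ℝ] K, ∀ i, T (u i) = v i := by
  have hdense : DenseRange (Finsupp.linearCombination ℝ u) := by
    rw [DenseRange, ← LinearMap.coe_range, Finsupp.range_linearCombination]
    exact hu
  have hnorm (a : ι →₀ ℝ) :
      ‖Finsupp.linearCombination ℝ v a‖ = ‖Finsupp.linearCombination ℝ u a‖ := by
    rw [← sq_eq_sq₀ (norm_nonneg _) (norm_nonneg _), ← real_inner_self_eq_norm_sq,
      ← real_inner_self_eq_norm_sq]
    simp only [Finsupp.linearCombination_apply, Finsupp.sum, sum_inner, inner_sum, inner_smul_left,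
      inner_smul_right, h]
  have hb : ∃ C, ∀ a, ‖Finsupp.linearCombination ℝ v a‖ ≤ C * ‖Finsupp.linearCombination ℝ u a‖ :=
    ⟨1, fun a => by rw [hnorm, one_mul]⟩
  refine ⟨⟨(Finsupp.linearCombination ℝ v).extendOfNorm (Finsupp.linearCombination ℝ u), ?_⟩, ?_⟩
  · refine hdense.induction ?_ (isClosed_eq (by simp only [ContinuousLinearMap.coe_coe]; fun_prop)
      continuous_norm)
    rintro _ ⟨a, rfl⟩
    simp [LinearMap.extendOfNorm_eq hdense hb, hnorm]
  · intro i
    simpa using LinearMap.extendOfNorm_eq hdense hb (Finsupp.single i 1)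

theorem iteratedDeriv_zero_eq_of_hasSum {F : ℝ → ℝ} {b : ℕ → ℝ}
    (h : ∀ x, HasSum (fun n => x ^ n * b n) (F x)) (n : ℕ) :
    iteratedDeriv n F 0 = n.factorial * b n := by
  have hF : HasFPowerSeriesAt F (FormalMultilinearSeries.ofScalars ℝ b) 0 :=
    hasFPowerSeriesAt_iff.2 (.of_forall fun x => by simpa using h x)
  have hc := congrArg (fun p => FormalMultilinearSeries.coeff p n)
    (hF.analyticAt.hasFPowerSeriesAt.eq_formalMultilinearSeries hF)
  simp only [FormalMultilinearSeries.coeff_ofScalars] at hc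
  rw [← hc, mul_div_cancel₀ _ (by positivity)]

theorem hasSum_pow_mul_div_sqrt_factorial {t : ℝ} (ht : 0 < t) (x z : ℝ) :
    HasSum (fun n : ℕ => x ^ n / √(t ^ n * n.factorial) * (z ^ n / √(t ^ n * n.factorial)))
      (exp (x * z / t)) := by
  rw [Real.exp_eq_exp_ℝ]
  refine (NormedSpace.expSeries_div_hasSum_exp (x * z / t)).congr_fun fun n => ?_
  rw [div_mul_div_comm, Real.mul_self_sqrt (by positivity), div_pow, mul_pow, div_div]

theorem memℓp_pow_div_sqrt_factorial {t : ℝ} (ht : 0 < t) (x : ℝ) :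
    Memℓp (fun n : ℕ => x ^ n / √(t ^ n * n.factorial)) 2 := by
  refine memℓp_gen ?_
  convert (hasSum_pow_mul_div_sqrt_factorial ht x x).summable using 2 with n
  rw [ENNReal.toReal_ofNat, Real.rpow_two, norm_eq_abs, sq_abs, pow_two]

theorem memLp_exp_mul_gaussianReal (m : ℝ) (t : NNReal) (x : ℝ) :
    MemLp (fun y => exp (x * y)) 2 (gaussianReal m t) := by
  rw [memLp_two_iff_integrable_sq (by fun_prop)]
  convert integrable_exp_mul_gaussianReal (μ := m) (v := t) (2 * x) using 2 with y
  rw [← Real.exp_nat_mul]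
  push_cast
  ring_nf

theorem memLp_exp_mul_div_sub_gaussianReal (t : NNReal) (x : ℝ) :
    MemLp (fun y => exp (x * y / t - x ^ 2 / (2 * t))) 2 (gaussianReal 0 t) := by
  convert (memLp_exp_mul_gaussianReal 0 t (x / t)).mul_const (exp (-(x ^ 2 / (2 * t)))) using 2 with y
  rw [← Real.exp_add]
  ring_nf

theorem integral_exp_mul_exp_gaussianReal {t : NNReal} (ht : 0 < t) (x z : ℝ) :
    ∫ y, exp (x * y / t - x ^ 2 / (2 * t)) * exp (z * y / t - z ^ 2 / (2 * t)) ∂(gaussianReal 0 t)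
      = exp (x * z / t) := by
  have ht' : (t : ℝ) ≠ 0 := by positivity
  have h := congrFun (mgf_id_gaussianReal (μ := 0) (v := t)) ((x + z) / t)
  simp only [mgf, id] at h
  have he (y : ℝ) : exp (x * y / t - x ^ 2 / (2 * t)) * exp (z * y / t - z ^ 2 / (2 * t))
      = exp ((x + z) / t * y) * exp (-(x ^ 2 + z ^ 2) / (2 * t)) := by
    rw [← Real.exp_add, ← Real.exp_add]
    ring_nf
  simp_rw [he]
  rw [integral_mul_const, h, ← Real.exp_add]
  congr 1
  field_simp
  ring

theorem inner_toLp {α : Type*} [MeasurableSpace α] {μ : Measure α} {f g : α → ℝ}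
    (hf : MemLp f 2 μ) (hg : MemLp g 2 μ) :
    inner ℝ (hf.toLp f) (hg.toLp g) = ∫ y, f y * g y ∂μ := by
  rw [L2.inner_def]
  refine integral_congr_ae ?_
  filter_upwards [hf.coeFn_toLp, hg.coeFn_toLp] with y h1 h2
  simp [h1, h2, mul_comm]

theorem dense_span_exp_gaussianReal {t : NNReal} (ht : 0 < t) :
    Dense (Submodule.span ℝ (Set.range fun x : ℝ =>
      (memLp_exp_mul_div_sub_gaussianReal t x).toLp _) : Set (Lp ℝ 2 (gaussianReal 0 t))) := by
  have ht' : (t : ℝ) ≠ 0 := by positivity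
  rw [Submodule.dense_iff_topologicalClosure_eq_top, Submodule.topologicalClosure_eq_top_iff,
    Submodule.eq_bot_iff]
  intro f hf
  have hf0 (x : ℝ) : ∫ y, f y * exp (x * y) ∂(gaussianReal 0 t) = 0 := by
    have h := hf _ (Submodule.subset_span ⟨t * x, rfl⟩)
    rw [real_inner_comm, ← Lp.toLp_coeFn f (Lp.memLp f), inner_toLp] at h
    have he (y : ℝ) : f y * exp (t * x * y / t - (t * x) ^ 2 / (2 * t))
        = f y * exp (x * y) * exp (-((t * x) ^ 2 / (2 * t))) := by
      rw [mul_assoc (f y), ← Real.exp_add, mul_assoc (t : ℝ), mul_div_cancel_left₀ _ ht', sub_eq_add_neg]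
    simp_rw [he] at h
    rw [integral_mul_const] at h
    simpa using h
  have := ae_eq_zero_of_integral_mul_exp_eq_zero
    (fun x => (Lp.memLp f).integrable_mul (memLp_exp_mul_gaussianReal 0 t x)) hf0
  exact (Lp.eq_zero_iff_ae_eq_zero).2 this

theorem heatP_eq_integral_gaussianReal (φ : ℝ → ℝ) {t : NNReal} (ht : 0 < t) (x : ℝ) :
    heatP t φ x = ∫ y, φ y * exp (x * y / t - x ^ 2 / (2 * t)) ∂(gaussianReal 0 t) := by
  have ht' : (0 : ℝ) < t := by exact_mod_cast ht
  rw [integral_gaussianReal_eq_integral_smul ht.ne', heatP]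
  congr 1 with y
  have he : exp (-(x - y) ^ 2 / (2 * t))
      = exp (-(y - 0) ^ 2 / (2 * t)) * exp (x * y / t - x ^ 2 / (2 * t)) := by
    rw [← Real.exp_add]
    congr 1
    field_simp
    ring
  simp only [gaussianPDFReal, smul_eq_mul]
  rw [he, Real.rpow_neg (by positivity), ← Real.sqrt_eq_rpow]
  ring

theorem stmt11 (φ : ℝ → ℝ) (hφm : Measurable φ) (M : ℝ) (hφb : ∀ x, |φ x| ≤ M)
    (t : NNReal) (ht : 0 < t) :
    ∫ x, (φ x) ^ 2 ∂(gaussianReal 0 t)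
      = ∑' n : ℕ, (t : ℝ) ^ n / (Nat.factorial n)
          * (iteratedDeriv n (heatP t φ) 0) ^ 2 := by
  have ht' : (0 : ℝ) < t := by exact_mod_cast ht
  have hφ : MemLp φ 2 (gaussianReal 0 t) :=
    MemLp.of_bound hφm.aestronglyMeasurable M (.of_forall hφb)
  let v (x : ℝ) : lp (fun _ : ℕ => ℝ) 2 := ⟨_, memℓp_pow_div_sqrt_factorial ht' x⟩
  obtain ⟨T, hT⟩ := exists_isometry_of_inner_eq (v := v) (dense_span_exp_gaussianReal ht) <| by
    intro x z
    rw [inner_toLp, integral_exp_mul_exp_gaussianReal ht, lp.inner_eq_tsum,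
      ← (hasSum_pow_mul_div_sqrt_factorial ht' x z).tsum_eq]
    simp [v, mul_comm]
  set c := T (hφ.toLp φ) with hc
  have hsum (x : ℝ) :
      HasSum (fun n : ℕ => x ^ n * (c n / √((t : ℝ) ^ n * n.factorial))) (heatP t φ x) := by
    rw [heatP_eq_integral_gaussianReal φ ht,
      ← inner_toLp hφ (memLp_exp_mul_div_sub_gaussianReal t x), ← T.inner_map_map, hT]
    refine (lp.hasSum_inner (𝕜 := ℝ) c (v x)).congr_fun fun n => ?_
    simp only [v, RCLike.inner_apply, conj_trivial]
    ring
  calc ∫ x, (φ x) ^ 2 ∂(gaussianReal 0 t) = inner ℝ c c := by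
        rw [hc, T.inner_map_map, inner_toLp]
        simp_rw [pow_two]
    _ = _ := by
        rw [lp.inner_eq_tsum]
        refine tsum_congr fun n => ?_
        rw [iteratedDeriv_zero_eq_of_hasSum hsum, mul_pow, div_pow, Real.sq_sqrt (by positivity)]
        simp only [RCLike.inner_apply, conj_trivial]
        field_simp
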